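/- If f is pointed and idempotent then f* ≡_W f, and conversely f* ≡_W f implies f is pointed and idempotent. -/

import Mathlib

open scoped Classical

/-! ## Basic notions of Weihrauch complexity -/

/-- The finite prefix of length `m` of a point of Baire space, as a list. -/
def pref (p : ℕ → ℕ) (m : ℕ) : List ℕ := List.ofFn (fun i : Fin m => p i)

/-- Type-2 computability of a partial function on Baire space, defined via monotone
computable word functions producing longer and longer prefixes of the output. -/
def BaireComputable (F : (ℕ → ℕ) →. (ℕ → ℕ)) : Prop :=
  ∃ ψ : List ℕ → List ℕ, Computable ψ ∧
    (∀ u v : List ℕ, u <+: v → ψ u <+: ψ v) ∧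
    ∀ p q, q ∈ F p → ∀ n, ∃ m, (ψ (pref p m))[n]? = some (q n)

/-- The interleaving pairing `⟨p,q⟩` on Baire space. -/
def pairB (p q : ℕ → ℕ) : ℕ → ℕ := fun n => if n % 2 = 0 then p (n / 2) else q (n / 2)

def evenPart (r : ℕ → ℕ) : ℕ → ℕ := fun n => r (2 * n)

def oddPart (r : ℕ → ℕ) : ℕ → ℕ := fun n => r (2 * n + 1)

/-- The `i`-th component of the countable tupling `⟨p₀,p₁,…⟩⟨i,k⟩ = pᵢ(k)`
(using the Cantor pairing). -/
def proj (r : ℕ → ℕ) (i : ℕ) : ℕ → ℕ := fun k => r (Nat.pair i k)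

/-- A represented space: a set `X` together with a surjective partial map
from Baire space onto `X`. -/
structure RepSp (X : Type*) where
  δ : (ℕ → ℕ) →. X
  surj : ∀ x : X, ∃ p, x ∈ δ p

theorem mem_part_mk {α : Type*} {D : Prop} {g : D → α} {a : α} (h : D) (e : g h = a) :
    a ∈ Part.mk D g := Part.mem_mk_iff.mpr ⟨h, e⟩

/-- The identity representation of Baire space. -/
def repBaire : RepSp (ℕ → ℕ) where
  δ := fun p => Part.some p
  surj := fun p => ⟨p, Part.mem_some p⟩

/-- The standard representation of the natural numbers. -/
def repNat : RepSp ℕ where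
  δ := fun p => Part.some (p 0)
  surj := fun n => ⟨fun _ => n, Part.mem_some n⟩

/-- `F` is a realizer of the problem `f :⊆ X ⇉ Y` (a problem is a multi-valued
function `f : X → Set Y`, whose domain is the set of `x` with `f x` nonempty). -/
def Realizes {X Y : Type*} (δX : RepSp X) (δY : RepSp Y)
    (f : X → Set Y) (F : (ℕ → ℕ) →. (ℕ → ℕ)) : Prop :=
  ∀ p x, x ∈ δX.δ p → (f x).Nonempty → ∃ q ∈ F p, ∃ y ∈ δY.δ q, y ∈ f x

/-- Weihrauch reducibility: `f ≤_W g` iff there are computable `H, K` such that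
`p ↦ H⟨p, G(K(p))⟩` realizes `f` whenever `G` realizes `g`. -/
def WRed {X Y Z W : Type*} (δX : RepSp X) (δY : RepSp Y) (δZ : RepSp Z) (δW : RepSp W)
    (f : X → Set Y) (g : Z → Set W) : Prop :=
  ∃ H K : (ℕ → ℕ) →. (ℕ → ℕ), BaireComputable H ∧ BaireComputable K ∧
    ∀ G : (ℕ → ℕ) →. (ℕ → ℕ), Realizes δZ δW g G →
      Realizes δX δY f
        (fun p => (K p).bind fun r => (G r).bind fun q => H (pairB p q))

/-- Strong Weihrauch reducibility: `f ≤_sW g` iff there are computable `H, K`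
such that `H ∘ G ∘ K` realizes `f` whenever `G` realizes `g`. -/
def SWRed {X Y Z W : Type*} (δX : RepSp X) (δY : RepSp Y) (δZ : RepSp Z) (δW : RepSp W)
    (f : X → Set Y) (g : Z → Set W) : Prop :=
  ∃ H K : (ℕ → ℕ) →. (ℕ → ℕ), BaireComputable H ∧ BaireComputable K ∧
    ∀ G : (ℕ → ℕ) →. (ℕ → ℕ), Realizes δZ δW g G →
      Realizes δX δY f (fun p => (K p).bind fun r => (G r).bind fun q => H q)

/-- Weihrauch equivalence. -/
def WEquiv {X Y Z W : Type*} (δX : RepSp X) (δY : RepSp Y) (δZ : RepSp Z) (δW : RepSp W)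
    (f : X → Set Y) (g : Z → Set W) : Prop :=
  WRed δX δY δZ δW f g ∧ WRed δZ δW δX δY g f

/-- Strong Weihrauch equivalence. -/
def SWEquiv {X Y Z W : Type*} (δX : RepSp X) (δY : RepSp Y) (δZ : RepSp Z) (δW : RepSp W)
    (f : X → Set Y) (g : Z → Set W) : Prop :=
  SWRed δX δY δZ δW f g ∧ SWRed δZ δW δX δY g f

/-- The identity problem on Baire space. -/
def idProblem : (ℕ → ℕ) → Set (ℕ → ℕ) := fun p => {p}

/-! ## Constructions on representations and problems -/

/-- Representation of the product of two represented spaces. -/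
def prodRep {X Z : Type*} (δX : RepSp X) (δZ : RepSp Z) : RepSp (X × Z) where
  δ := fun r => (δX.δ (evenPart r)).bind fun x => (δZ.δ (oddPart r)).map fun z => (x, z)
  surj := by
    intro xz
    obtain ⟨p, hp⟩ := δX.surj xz.1
    obtain ⟨q, hq⟩ := δZ.surj xz.2
    have he : evenPart (pairB p q) = p := by
      funext n
      have h1 : (2 * n) % 2 = 0 := by omega
      have h2 : (2 * n) / 2 = n := by omega
      simp [evenPart, pairB, h1, h2]
    have ho : oddPart (pairB p q) = q := by
      funext n
      have h1 : ¬((2 * n + 1) % 2 = 0) := by omega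
      have h2 : (2 * n + 1) / 2 = n := by omega
      simp [oddPart, pairB, h1, h2]
    refine ⟨pairB p q, Part.mem_bind_iff.mpr ⟨xz.1, by rw [he]; exact hp,
      (Part.mem_map_iff _).mpr ⟨xz.2, by rw [ho]; exact hq, rfl⟩⟩⟩

/-- The product `f × g` of two problems. -/
def prodProblem {X Y Z W : Type*} (f : X → Set Y) (g : Z → Set W) :
    X × Z → Set (Y × W) :=
  fun xz => f xz.1 ×ˢ g xz.2

/-- Representation of the disjoint union of two represented spaces. -/
def sumRep {X Z : Type*} (δX : RepSp X) (δZ : RepSp Z) : RepSp (X ⊕ Z) where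
  δ := fun r =>
    if r 0 = 0 then (δX.δ fun n => r (n + 1)).map Sum.inl
    else if r 0 = 1 then (δZ.δ fun n => r (n + 1)).map Sum.inr
    else Part.none
  surj := by
    rintro (x | z)
    · obtain ⟨p, hp⟩ := δX.surj x
      refine ⟨fun n => Nat.casesOn n 0 p, ?_⟩
      show Sum.inl x ∈ (δX.δ p).map Sum.inl
      exact (Part.mem_map_iff _).mpr ⟨x, hp, rfl⟩
    · obtain ⟨p, hp⟩ := δZ.surj z
      refine ⟨fun n => Nat.casesOn n 1 p, ?_⟩
      show Sum.inr z ∈ (δZ.δ p).map Sum.inr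
      exact (Part.mem_map_iff _).mpr ⟨z, hp, rfl⟩

/-- The coproduct `f ⊔ g` of two problems. -/
def coprodProblem {X Y Z W : Type*} (f : X → Set Y) (g : Z → Set W) :
    X ⊕ Z → Set (Y ⊕ W)
  | Sum.inl x => Sum.inl '' f x
  | Sum.inr z => Sum.inr '' g z

/-- The meet `f ⊓ g` of two problems. -/
def meetProblem {X Y Z W : Type*} (f : X → Set Y) (g : Z → Set W) :
    X × Z → Set (Y ⊕ W) :=
  fun xz => Sum.inl '' f xz.1 ∪ Sum.inr '' g xz.2

/-- Representation of the space of sequences `X^ℕ` via the countable tupling. -/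
noncomputable def seqRep {X : Type*} (δX : RepSp X) : RepSp (ℕ → X) where
  δ := fun r => Part.mk (∀ i : ℕ, ∃ x, x ∈ δX.δ (proj r i))
    (fun h i => Classical.choose (h i))
  surj := by
    intro x
    choose p hp using fun i => δX.surj (x i)
    refine ⟨fun m => p (Nat.unpair m).1 (Nat.unpair m).2, ?_⟩
    have hproj : ∀ i, proj (fun m => p (Nat.unpair m).1 (Nat.unpair m).2) i = p i := by
      intro i; funext k; simp [proj]
    have hdom : ∀ i : ℕ, ∃ y, y ∈ δX.δ (proj (fun m => p (Nat.unpair m).1 (Nat.unpair m).2) i) :=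
      fun i => ⟨x i, by rw [hproj i]; exact hp i⟩
    refine mem_part_mk hdom ?_
    funext i
    exact Part.mem_unique (Classical.choose_spec (hdom i)) (by rw [hproj i]; exact hp i)

/-- The parallelization `f̂` of a problem. -/
def parallelProblem {X Y : Type*} (f : X → Set Y) : (ℕ → X) → Set (ℕ → Y) :=
  fun x => {y | ∀ i, y i ∈ f (x i)}

/-- Representation of the finite power `Xⁿ` via the countable tupling. -/
noncomputable def finProdRep (n : ℕ) {X : Type*} (δX : RepSp X) : RepSp (Fin n → X) where
  δ := fun r => Part.mk (∀ i : Fin n, ∃ x, x ∈ δX.δ (proj r i))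
    (fun h i => Classical.choose (h i))
  surj := by
    intro x
    choose p hp using fun i => δX.surj (x i)
    classical
    refine ⟨fun m => if h : (Nat.unpair m).1 < n then p ⟨_, h⟩ (Nat.unpair m).2 else 0, ?_⟩
    have hproj : ∀ i : Fin n,
        proj (fun m => if h : (Nat.unpair m).1 < n then p ⟨_, h⟩ (Nat.unpair m).2 else 0) i
          = p i := by
      intro i; funext k; simp [proj, i.isLt]
    have hdom : ∀ i : Fin n, ∃ y, y ∈ δX.δ
        (proj (fun m => if h : (Nat.unpair m).1 < n then p ⟨_, h⟩ (Nat.unpair m).2 else 0) i) :=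
      fun i => ⟨x i, by rw [hproj i]; exact hp i⟩
    refine mem_part_mk hdom ?_
    funext i
    exact Part.mem_unique (Classical.choose_spec (hdom i)) (by rw [hproj i]; exact hp i)

/-- The `n`-fold product `fⁿ` of a problem with itself. -/
def finProdProblem (n : ℕ) {X Y : Type*} (f : X → Set Y) :
    (Fin n → X) → Set (Fin n → Y) :=
  fun x => {y | ∀ i, y i ∈ f (x i)}

/-- Representation of the space `X*` of words over `X`. -/
noncomputable def starRep {X : Type*} (δX : RepSp X) : RepSp (Σ n : ℕ, Fin n → X) where
  δ := fun r => Part.mk (∀ i : Fin (r 0), ∃ x, x ∈ δX.δ (proj (fun m => r (m + 1)) i))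
    (fun h => ⟨r 0, fun i => Classical.choose (h i)⟩)
  surj := by
    rintro ⟨n, x⟩
    choose p hp using fun i => δX.surj (x i)
    classical
    have hproj : ∀ i : Fin n,
        proj (fun m' => if h : (Nat.unpair m').1 < n then p ⟨_, h⟩ (Nat.unpair m').2 else 0) i
          = p i := by
      intro i; funext k; simp [proj, i.isLt]
    have hdom : ∀ i : Fin n, ∃ y, y ∈ δX.δ
        (proj (fun m' => if h : (Nat.unpair m').1 < n then p ⟨_, h⟩ (Nat.unpair m').2 else 0) i) :=
      fun i => ⟨x i, by rw [hproj i]; exact hp i⟩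
    refine ⟨fun m => Nat.casesOn m n
      (fun m' => if h : (Nat.unpair m').1 < n then p ⟨_, h⟩ (Nat.unpair m').2 else 0),
      Part.mem_mk_iff.mpr ⟨hdom, ?_⟩⟩
    have hx : (fun i : Fin n => Classical.choose (hdom i)) = x := funext fun i =>
      Part.mem_unique (Classical.choose_spec (hdom i)) (by rw [hproj i]; exact hp i)
    exact congrArg (Sigma.mk n) hx

/-- The finite parallelization `f*` of a problem. -/
def starProblem {X Y : Type*} (f : X → Set Y) :
    (Σ n : ℕ, Fin n → X) → Set (Σ n : ℕ, Fin n → Y) :=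
  fun x => {y | ∃ e : x.1 = y.1, ∀ i : Fin x.1, y.2 (Fin.cast e i) ∈ f (x.2 i)}

/-- Representation of a countable disjoint union of represented spaces. -/
def csumRep {Z : ℕ → Type*} (δZ : ∀ i, RepSp (Z i)) : RepSp (Σ i, Z i) where
  δ := fun r => ((δZ (r 0)).δ (fun n => r (n + 1))).map fun z => ⟨r 0, z⟩
  surj := by
    rintro ⟨i, z⟩
    obtain ⟨p, hp⟩ := (δZ i).surj z
    exact ⟨fun n => Nat.casesOn n i p, (Part.mem_map_iff _).mpr ⟨z, hp, rfl⟩⟩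

/-- The countable coproduct `⊔ᵢ gᵢ` of a sequence of problems. -/
def csumProblem {Z W : ℕ → Type*} (g : ∀ i, Z i → Set (W i)) :
    (Σ i, Z i) → Set (Σ i, W i) :=
  fun x => Sigma.mk x.1 '' g x.1 x.2

/-! ## Limits and jumps -/

/-- The limit map on Baire space, as a (single-valued) problem:
`lim⟨p₀,p₁,…⟩` is the pointwise limit of the sequence `(pₙ)ₙ`. -/
def limProblem : (ℕ → ℕ) → Set (ℕ → ℕ) :=
  fun r => {q | ∀ n, ∃ N, ∀ m, N ≤ m → proj r m n = q n}

/-- The limit map on Baire space as a partial (single-valued) function. -/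
noncomputable def limP : (ℕ → ℕ) →. (ℕ → ℕ) :=
  fun r => Part.mk (∀ n, ∃ N, ∀ m, N ≤ m → proj r m n = proj r N n)
    (fun h n => proj r (Classical.choose (h n)) n)

/-- The jump `(X′, δ′)` of a represented space: `δ′ := δ ∘ lim`. -/
noncomputable def jumpRep {X : Type*} (δ : RepSp X) : RepSp X where
  δ := fun p => (limP p).bind δ.δ
  surj := by
    intro x
    obtain ⟨p, hp⟩ := δ.surj x
    refine ⟨fun m => p (Nat.unpair m).2, Part.mem_bind_iff.mpr ⟨p, ?_, hp⟩⟩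
    have hproj : ∀ m, proj (fun m => p (Nat.unpair m).2) m = p := by
      intro m; funext k; simp [proj]
    have hdom : ∀ n, ∃ N, ∀ m, N ≤ m →
        proj (fun m => p (Nat.unpair m).2) m n = proj (fun m => p (Nat.unpair m).2) N n :=
      fun n => ⟨0, fun m _ => by rw [hproj m, hproj 0]⟩
    refine mem_part_mk hdom ?_
    funext n
    rw [hproj]

/-! ## Choice problems -/

/-- The representation of subsets of `ℕ` by enumerations of their complements:
`p` is a name of `A` iff `p` enumerates (via `p m = n + 1`) exactly the `n ∉ A`. -/
def enumNegRep : RepSp (Set ℕ) where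
  δ := fun p => Part.some {n | ∀ m, p m ≠ n + 1}
  surj := by
    intro S
    by_cases h : Sᶜ.Nonempty
    · obtain ⟨f, hf⟩ := (Set.to_countable Sᶜ).exists_eq_range h
      refine ⟨fun m => f m + 1, Part.mem_some_iff.mpr ?_⟩
      ext n
      simp only [Set.mem_setOf_eq]
      constructor
      · intro hn m hm
        have hfm : f m ∈ Sᶜ := by rw [hf]; exact ⟨m, rfl⟩
        have hfmn : f m = n := by omega
        rw [hfmn] at hfm
        exact hfm hn
      · intro hn
        by_contra hS
        have hmem : n ∈ Sᶜ := hS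
        rw [hf] at hmem
        obtain ⟨m, hm⟩ := hmem
        exact hn m (by omega)
    · refine ⟨fun _ => 0, Part.mem_some_iff.mpr ?_⟩
      have hS : S = Set.univ := by
        rw [← compl_compl S, Set.not_nonempty_iff_eq_empty.mp h, Set.compl_empty]
      rw [hS]
      ext n
      simp

/-- Choice on the natural numbers: given (a name of) a nonempty set `A ⊆ ℕ`,
find an element of `A`. -/
def CNat : Set ℕ → Set ℕ := fun A => A

/-- Choice on the finite set `{0, …, k-1}`. -/
def CFin (k : ℕ) : Set ℕ → Set ℕ := fun A => {n | n ∈ A ∧ A ⊆ Set.Iio k}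

/-- The limited principle of omniscience as a problem. -/
noncomputable def LPOProblem : (ℕ → ℕ) → Set ℕ :=
  fun p => {if ∃ k, p k = 0 then 1 else 0}


/-- Restriction of a problem on Baire space to a set `A`. -/
def restrictProblem (F : (ℕ → ℕ) → Set (ℕ → ℕ)) (A : Set (ℕ → ℕ)) :
    (ℕ → ℕ) → Set (ℕ → ℕ) :=
  fun p => {q | q ∈ F p ∧ p ∈ A}

/-- A problem is a fractal if it has a representative on Baire space all of whose
restrictions to clopen sets meeting its domain are Weihrauch equivalent to it. -/
def Fractal {X Y : Type*} (δX : RepSp X) (δY : RepSp Y) (f : X → Set Y) : Prop :=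
  ∃ F : (ℕ → ℕ) → Set (ℕ → ℕ),
    WEquiv repBaire repBaire δX δY F f ∧
    ∀ A : Set (ℕ → ℕ), IsClopen A → (A ∩ {p | (F p).Nonempty}).Nonempty →
      WEquiv repBaire repBaire repBaire repBaire (restrictProblem F A) F

/-- A problem `f` is densely realized if for every name `p` of an admissible instance
the set of names of solutions is dense in the domain of the output representation. -/
def DenselyRealized {X Y : Type*} (δX : RepSp X) (δY : RepSp Y) (f : X → Set Y) : Prop :=
  ∀ p, ∀ x ∈ δX.δ p, (f x).Nonempty →
    {q : ℕ → ℕ | (δY.δ q).Dom} ⊆ closure {q : ℕ → ℕ | ∃ y ∈ δY.δ q, y ∈ f x}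

/-- Turing reducibility on Baire space: `a` is computable from `b`. -/
def TRed (a b : ℕ → ℕ) : Prop := ∃ F, BaireComputable F ∧ a ∈ F b

/-- The two-point space `{p, q}` represented by the identity. -/
def pqRep (p q : ℕ → ℕ) : RepSp {r : ℕ → ℕ // r = p ∨ r = q} where
  δ := fun r => Part.mk (r = p ∨ r = q) (fun h => ⟨r, h⟩)
  surj := fun x => ⟨x.1, Part.mem_mk_iff.mpr ⟨x.2, rfl⟩⟩

/-- The problem `m_A` associated with a set `A ⊆ ℕ`. -/
noncomputable def mProblem (p q : ℕ → ℕ) (A : Set ℕ) :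
    ℕ → Set {r : ℕ → ℕ // r = p ∨ r = q} :=
  fun n => {y | y.1 = if n ∈ A then p else q}

/-- The join `A ⊕ B` of two sets of natural numbers. -/
def mJoin (A B : Set ℕ) : Set ℕ :=
  {k | (k % 2 = 0 ∧ k / 2 ∈ A) ∨ (k % 2 = 1 ∧ k / 2 ∈ B)}

/-- The cardinality `#f` of a problem: the supremum of the cardinalities of sets
`M ⊆ dom f` whose images under `f` are pairwise disjoint. -/
noncomputable def problemCard {X Y : Type} (f : X → Set Y) : Cardinal :=
  sSup {c | ∃ M : Set X, (∀ x ∈ M, (f x).Nonempty) ∧ M.PairwiseDisjoint f ∧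
    c = Cardinal.mk M}

/-- Computability of a problem: it has a computable realizer. -/
def ComputableProblem {X Y : Type*} (δX : RepSp X) (δY : RepSp Y) (f : X → Set Y) : Prop :=
  ∃ F, BaireComputable F ∧ Realizes δX δY f F

/-- The minimum function on Baire space. -/
def minProblem : (ℕ → ℕ) → Set ℕ :=
  fun p => {n | n ∈ Set.range p ∧ ∀ m, n ≤ p m}

/-- The complementary minimum function `minᶜ`. -/
def mincProblem : (ℕ → ℕ) → Set ℕ :=
  fun p => {n | (∀ m, p m ≠ n) ∧ ∀ j, j < n → ∃ m, p m = j}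

/-- The maximum function on Baire space (defined on bounded sequences). -/
def maxProblem : (ℕ → ℕ) → Set ℕ :=
  fun p => {n | n ∈ Set.range p ∧ ∀ m, p m ≤ n}

/-! ### Word functions and relational computability -/

abbrev Bs := ℕ → ℕ

def Maps (ψ : List ℕ → List ℕ) (p q : Bs) : Prop :=
  ∀ n, ∃ m, (ψ (pref p m))[n]? = some (q n)

def WMono (ψ : List ℕ → List ℕ) : Prop := ∀ u v : List ℕ, u <+: v → ψ u <+: ψ v

def RC (R : Bs → Bs → Prop) : Prop :=
  ∃ ψ : List ℕ → List ℕ, Computable ψ ∧ WMono ψ ∧ ∀ p q, R p q → Maps ψ p q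

theorem pref_length (p : Bs) (m : ℕ) : (pref p m).length = m := by simp [pref]

theorem pref_get (p : Bs) {m i : ℕ} (h : i < m) : (pref p m)[i]? = some (p i) := by
  simp [pref, h]

theorem pref_get_ge (p : Bs) {m i : ℕ} (h : m ≤ i) : (pref p m)[i]? = none := by
  simp [pref, h]

theorem pref_prefix_of (p : Bs) (m : ℕ) (l : List ℕ)
    (h : ∀ i < m, l[i]? = some (p i)) : pref p m <+: l := by
  rw [List.prefix_iff_getElem?]
  intro i hi
  rw [pref_length] at hi
  rw [h i hi]
  simp [pref]

theorem prefix_get {u v : List ℕ} (h : u <+: v) {i a : ℕ} (e : u[i]? = some a) :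
    v[i]? = some a := by
  obtain ⟨t, rfl⟩ := h
  have : i < u.length := by
    by_contra hc
    rw [List.getElem?_eq_none (by omega)] at e
    cases e
  rw [List.getElem?_append_left this, e]

theorem pref_mono (p : Bs) {m k : ℕ} (h : m ≤ k) : pref p m <+: pref p k :=
  pref_prefix_of _ _ _ fun _ hi => pref_get p (by omega)

theorem pref_succ (p : Bs) (m : ℕ) : pref p (m + 1) = p 0 :: pref (fun n => p (n + 1)) m := by
  simp [pref, List.ofFn_succ]

theorem Maps.get {ψ : List ℕ → List ℕ} (hψ : WMono ψ) {p q : Bs} (h : Maps ψ p q) (k : ℕ) :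
    ∃ M, pref q k <+: ψ (pref p M) := by
  choose m hm using h
  refine ⟨(Finset.range k).sup m, pref_prefix_of _ _ _ fun i hi => ?_⟩
  refine prefix_get (hψ _ _ (pref_mono p ?_)) (hm i)
  exact Finset.le_sup (f := m) (Finset.mem_range.mpr hi)

theorem Maps.unique {ψ : List ℕ → List ℕ} (hψ : WMono ψ) {p q q' : Bs}
    (h : Maps ψ p q) (h' : Maps ψ p q') : q = q' := by
  funext n
  obtain ⟨m, hm⟩ := h n
  obtain ⟨k, hk⟩ := h' n
  have h1 := prefix_get (hψ _ _ (pref_mono p (le_max_left m k))) hm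
  have h2 := prefix_get (hψ _ _ (pref_mono p (le_max_right m k))) hk
  rw [h1] at h2
  exact Option.some.inj h2

theorem Maps.comp {ψ χ : List ℕ → List ℕ} (hψ : WMono ψ) (hχ : WMono χ) {p q r : Bs}
    (h : Maps ψ p q) (h' : Maps χ q r) : Maps (fun u => χ (ψ u)) p r := by
  intro n
  obtain ⟨m, hm⟩ := h' n
  obtain ⟨M, hM⟩ := h.get hψ m
  exact ⟨M, prefix_get (hχ _ _ hM) hm⟩

theorem RC.mono {R R' : Bs → Bs → Prop} (h : RC R) (hR : ∀ p q, R' p q → R p q) : RC R' := by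
  obtain ⟨ψ, h1, h2, h3⟩ := h
  exact ⟨ψ, h1, h2, fun p q hq => h3 p q (hR p q hq)⟩

theorem RC.comp {R S : Bs → Bs → Prop} (h : RC R) (h' : RC S) :
    RC (fun p r => ∃ q, R p q ∧ S q r) := by
  obtain ⟨ψ, h1, h2, h3⟩ := h
  obtain ⟨χ, g1, g2, g3⟩ := h'
  refine ⟨fun u => χ (ψ u), g1.comp h1, fun u v huv => g2 _ _ (h2 _ _ huv), ?_⟩
  rintro p r ⟨q, hq, hr⟩
  exact (h3 _ _ hq).comp h2 g2 (g3 _ _ hr)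

theorem RC.exists_F {R : Bs → Bs → Prop} (h : RC R) :
    ∃ F : Bs →. Bs, BaireComputable F ∧ ∀ p q, R p q → q ∈ F p := by
  obtain ⟨ψ, h1, h2, h3⟩ := h
  refine ⟨fun p => ⟨∃ q, Maps ψ p q, fun h => Classical.choose h⟩, ⟨ψ, h1, h2, ?_⟩, ?_⟩
  · rintro p q ⟨hd, rfl⟩
    exact Classical.choose_spec hd
  · intro p q hq
    have hd : ∃ q, Maps ψ p q := ⟨q, h3 _ _ hq⟩
    exact ⟨hd, (Classical.choose_spec hd).unique h2 (h3 _ _ hq)⟩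

theorem BaireComputable.rc {F : Bs →. Bs} (h : BaireComputable F) : RC (fun p q => q ∈ F p) := h

/-! ### Building word functions from digit functions -/

def accW (φ : List ℕ → ℕ → Option ℕ) (u : List ℕ) (k : ℕ) : List ℕ :=
  Nat.rec [] (fun n acc => if acc.length = n then acc ++ (φ u n).toList else acc) k

theorem accW_succ (φ : List ℕ → ℕ → Option ℕ) (u : List ℕ) (k : ℕ) :
    accW φ u (k + 1) = if (accW φ u k).length = k then accW φ u k ++ (φ u k).toList
      else accW φ u k := rfl

theorem accW_length_le (φ : List ℕ → ℕ → Option ℕ) (u : List ℕ) (k : ℕ) :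
    (accW φ u k).length ≤ k := by
  induction k with
  | zero => simp [accW]
  | succ k ih =>
    rw [accW_succ]
    split_ifs with h
    · cases φ u k <;> simp [h]
    · omega

theorem accW_step (φ : List ℕ → ℕ → Option ℕ) (u : List ℕ) (k : ℕ) :
    accW φ u k <+: accW φ u (k + 1) := by
  rw [accW_succ]
  split_ifs
  · exact List.prefix_append _ _
  · exact List.prefix_rfl

theorem accW_mono_k (φ : List ℕ → ℕ → Option ℕ) (u : List ℕ) {k l : ℕ} (h : k ≤ l) :
    accW φ u k <+: accW φ u l := by
  induction l, h using Nat.le_induction with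
  | base => exact List.prefix_rfl
  | succ l _ ih => exact ih.trans (accW_step φ u l)

theorem accW_mono_u (φ : List ℕ → ℕ → Option ℕ)
    (hφ : ∀ u v n a, u <+: v → φ u n = some a → φ v n = some a)
    {u v : List ℕ} (huv : u <+: v) (k : ℕ) : accW φ u k <+: accW φ v k := by
  induction k with
  | zero => exact List.prefix_rfl
  | succ k ih =>
    by_cases h : (accW φ u k).length = k
    · have hv : (accW φ v k).length = k := by
        have := ih.length_le
        have := accW_length_le φ v k
        omega
      have e : accW φ u k = accW φ v k := ih.eq_of_length (by omega)
      rw [accW_succ, accW_succ, if_pos h, if_pos hv, e]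
      cases hu : φ u k with
      | none => simp
      | some a => rw [hφ _ _ _ _ huv hu]
    · rw [accW_succ, if_neg h]
      exact ih.trans (accW_step φ v k)

theorem accW_full (φ : List ℕ → ℕ → Option ℕ) (u : List ℕ) (q : Bs) (k : ℕ)
    (h : ∀ i < k, φ u i = some (q i)) : accW φ u k = pref q k := by
  induction k with
  | zero => simp [accW, pref]
  | succ k ih =>
    rw [accW_succ, ih fun i hi => h i (by omega), if_pos (pref_length q k), h k (by omega)]
    refine List.ext_getElem? fun i => ?_
    rcases lt_trichotomy i k with hi | hi | hi
    · rw [List.getElem?_append_left (by rw [pref_length]; exact hi), pref_get q hi,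
        pref_get q (by omega)]
    · subst hi
      rw [List.getElem?_append_right (by rw [pref_length]), pref_length, pref_get q (by omega)]
      simp
    · rw [pref_get_ge q (by omega), List.getElem?_eq_none]
      simp only [List.length_append, pref_length, Option.toList_some, List.length_singleton]
      omega

theorem RC.ofDigits (φ : List ℕ → ℕ → Option ℕ) (hc : Computable₂ φ)
    (hφ : ∀ u v n a, u <+: v → φ u n = some a → φ v n = some a) :
    RC (fun p q => ∀ n, ∃ m, φ (pref p m) n = some (q n)) := by
  refine ⟨fun u => accW φ u u.length, ?_, ?_, ?_⟩
  · refine Computable.nat_rec (σ := List ℕ)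
      (h := fun u (x : ℕ × List ℕ) => if x.2.length = x.1 then x.2 ++ (φ u x.1).toList else x.2)
      Computable.list_length (Computable.const []) ?_
    have hn : Computable (fun a : List ℕ × ℕ × List ℕ => a.2.1) :=
      Computable.fst.comp Computable.snd
    have hl : Computable (fun a : List ℕ × ℕ × List ℕ => a.2.2) :=
      Computable.snd.comp Computable.snd
    have h1 : Computable (fun a : List ℕ × ℕ × List ℕ => decide (a.2.2.length = a.2.1)) := by
      have : PrimrecPred (fun a : List ℕ × ℕ × List ℕ => a.2.2.length = a.2.1) :=
        Primrec.eq.comp (Primrec.list_length.comp (Primrec.snd.comp Primrec.snd))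
          (Primrec.fst.comp Primrec.snd)
      exact this.decide.to_comp
    have h2 : Computable (fun a : List ℕ × ℕ × List ℕ => (φ a.1 a.2.1).toList) := by
      have ht : Primrec (fun o : Option ℕ => o.toList) := by
        refine (Primrec.option_casesOn Primrec.id (Primrec.const [])
          (Primrec.list_cons.comp Primrec.snd (Primrec.const [])).to₂).of_eq ?_
        intro o; cases o <;> rfl
      exact ht.to_comp.comp (hc.comp Computable.fst hn)
    refine (Computable.cond h1 (Computable.list_append.comp hl h2) hl).of_eq ?_
    intro a
    by_cases h : a.2.2.length = a.2.1 <;> simp [h]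
  · intro u v huv
    exact (accW_mono_u φ hφ huv _).trans (accW_mono_k φ v huv.length_le)
  · intro p q h n
    choose m hm using h
    let M := max (n + 1) ((Finset.range (n + 1)).sup m)
    refine ⟨M, ?_⟩
    have h1 : accW φ (pref p M) (n + 1) = pref q (n + 1) := by
      refine accW_full _ _ _ _ fun i hi => hφ _ _ _ _ (pref_mono p ?_) (hm i)
      exact (Finset.le_sup (f := m) (Finset.mem_range.mpr hi)).trans (le_max_right _ _)
    have h2 : accW φ (pref p M) (n + 1) <+: accW φ (pref p M) (pref p M).length :=
      accW_mono_k _ _ (by rw [pref_length]; exact le_max_left _ _)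
    rw [h1] at h2
    exact prefix_get h2 (pref_get q (by omega))

theorem RC.pair {R S : Bs → Bs → Prop} (h : RC R) (h' : RC S) :
    RC (fun p t => ∃ q r, R p q ∧ S p r ∧ t = pairB q r) := by
  obtain ⟨ψ, h1, h2, h3⟩ := h
  obtain ⟨χ, g1, g2, g3⟩ := h'
  have hdiv : Computable (fun a : List ℕ × ℕ => a.2 / 2) :=
    (Primrec.nat_div.comp Primrec.snd (Primrec.const 2)).to_comp
  have hb : Computable (fun a : List ℕ × ℕ => decide (a.2 % 2 = 0)) := by
    have : PrimrecPred (fun a : List ℕ × ℕ => a.2 % 2 = 0) :=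
      Primrec.eq.comp (Primrec.nat_mod.comp Primrec.snd (Primrec.const 2)) (Primrec.const 0)
    exact this.decide.to_comp
  refine (RC.ofDigits (fun u n => bif decide (n % 2 = 0) then (ψ u)[n / 2]? else (χ u)[n / 2]?)
    ?_ ?_).mono ?_
  · exact Computable.cond hb
      (Computable.list_getElem?.comp (h1.comp Computable.fst) hdiv)
      (Computable.list_getElem?.comp (g1.comp Computable.fst) hdiv)
  · intro u v n a huv
    by_cases hn : n % 2 = 0
    · simpa [hn] using prefix_get (h2 _ _ huv)
    · simpa [hn] using prefix_get (g2 _ _ huv)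
  · rintro p t ⟨q, r, hq, hr, rfl⟩ n
    by_cases hn : n % 2 = 0
    · simpa [hn, pairB] using h3 _ _ hq (n / 2)
    · simpa [hn, pairB] using g3 _ _ hr (n / 2)

/-- Total computable maps. -/
def TC (F : Bs → Bs) : Prop := RC (fun p q => q = F p)

theorem TC.reindex (e : ℕ × ℕ → ℕ) (g : (ℕ × ℕ) × ℕ → ℕ) (he : Computable e)
    (hg : Computable g) : TC (fun p n => g ((n, p 0), p (e (n, p 0)))) := by
  refine (RC.ofDigits (fun u n => u[0]?.bind fun a => u[e (n, a)]?.map fun b => g ((n, a), b))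
    ?_ ?_).mono ?_
  · refine Computable.option_bind
      (Computable.list_getElem?.comp Computable.fst (Computable.const 0)) ?_
    refine Computable.option_map (Computable.list_getElem?.comp
      (Computable.fst.comp Computable.fst)
      (he.comp (Computable.pair (Computable.snd.comp Computable.fst) Computable.snd))) ?_
    exact hg.comp (Computable.pair (Computable.pair
      (Computable.snd.comp (Computable.fst.comp Computable.fst))
      (Computable.snd.comp Computable.fst)) Computable.snd)
  · intro u v n a huv
    simp only [Option.bind_eq_some_iff, Option.map_eq_some_iff]
    rintro ⟨b, hb, c, hc, hh⟩
    exact ⟨b, prefix_get huv hb, c, prefix_get huv hc, hh⟩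
  · rintro p q rfl n
    refine ⟨e (n, p 0) + 1, ?_⟩
    rw [pref_get p (by omega)]
    simp only [Option.bind_some]
    rw [pref_get p (by omega)]
    rfl

theorem RC.iter {R : Bs → Bs → Prop} (h : RC R) :
    RC (fun p q => ∃ s : ℕ → Bs, s 0 = (fun n => p (n + 1)) ∧ s (p 0) = q ∧
      ∀ i < p 0, R (s i) (s (i + 1))) := by
  obtain ⟨ψ, h1, h2, h3⟩ := h
  let J : ℕ → List ℕ → List ℕ := fun n t => Nat.rec t (fun _ x => ψ x) n
  have hJ : ∀ n, WMono (J n) := by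
    intro n
    induction n with
    | zero => exact fun u v h => h
    | succ n ih => exact fun u v h => h2 _ _ (ih u v h)
  refine ⟨fun u => J u.headI u.tail, ?_, ?_, ?_⟩
  · exact Computable.nat_rec (h := fun _ (x : ℕ × List ℕ) => ψ x.2)
      Primrec.list_headI.to_comp Primrec.list_tail.to_comp
      (h1.comp (Computable.snd.comp Computable.snd))
  · intro u v huv
    cases u with
    | nil => exact ⟨_, rfl⟩
    | cons a u =>
      obtain ⟨t, rfl⟩ := huv
      exact hJ a _ _ (List.prefix_append _ _)
  · rintro p q ⟨s, hs0, rfl, hs⟩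
    have key : ∀ k ≤ p 0, Maps (J k) (s 0) (s k) := by
      intro k
      induction k with
      | zero => exact fun _ n => ⟨n + 1, pref_get _ (by omega)⟩
      | succ k ih => exact fun hk => (ih (by omega)).comp (hJ k) h2 (h3 _ _ (hs k (by omega)))
    intro n
    obtain ⟨m, hm⟩ := key _ le_rfl n
    refine ⟨m + 1, ?_⟩
    rw [pref_succ, ← hs0]
    exact hm

/-! ### Total maps -/

theorem TC.comp {F G : Bs → Bs} (hG : TC G) (hF : TC F) : TC (fun p => G (F p)) :=
  (RC.comp hF hG).mono fun p _ h => ⟨F p, rfl, h⟩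

theorem TC.pair {F G : Bs → Bs} (hF : TC F) (hG : TC G) : TC (fun p => pairB (F p) (G p)) :=
  (RC.pair hF hG).mono fun p _ h => ⟨F p, G p, rfl, rfl, h⟩

/-- apply a relation after a total map -/
theorem RC.pre {R : Bs → Bs → Prop} {F : Bs → Bs} (hR : RC R) (hF : TC F) :
    RC (fun p q => R (F p) q) :=
  (RC.comp hF hR).mono fun p _ h => ⟨F p, rfl, h⟩

/-- apply a total map after a relation, keeping the original input -/
theorem RC.post {R : Bs → Bs → Prop} {G : Bs → Bs} (hR : RC R) (hid : TC fun p => p)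
    (hG : TC G) : RC (fun p t => ∃ q, R p q ∧ t = G (pairB p q)) :=
  (RC.comp (RC.pair hid hR) hG).mono fun p _ ⟨q, h, e⟩ => ⟨_, ⟨p, q, rfl, h, rfl⟩, e⟩

def tl (p : Bs) : Bs := fun n => p (n + 1)

def cns (k : ℕ) (p : Bs) : Bs := fun n => if n = 0 then k else p (n - 1)

theorem tl_cns (k : ℕ) (p : Bs) : tl (cns k p) = p := by funext n; simp [tl, cns]

theorem cns_zero (k : ℕ) (p : Bs) : cns k p 0 = k := by simp [cns]

theorem even_pair (p q : Bs) : evenPart (pairB p q) = p := by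
  funext n
  have h1 : (2 * n) % 2 = 0 := by omega
  have h2 : (2 * n) / 2 = n := by omega
  simp [evenPart, pairB, h1, h2]

theorem odd_pair (p q : Bs) : oddPart (pairB p q) = q := by
  funext n
  have h1 : ¬((2 * n + 1) % 2 = 0) := by omega
  have h2 : (2 * n + 1) / 2 = n := by omega
  simp [oddPart, pairB, h1, h2]

theorem pairB_zero (p q : Bs) : pairB p q 0 = p 0 := by simp [pairB]

theorem TC.reindex' (e : ℕ × ℕ → ℕ) (he : Primrec e) : TC (fun p n => p (e (n, p 0))) :=
  TC.reindex e Prod.snd he.to_comp Computable.snd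

theorem TC.id : TC (fun p => p) := TC.reindex' Prod.fst Primrec.fst

theorem TC.even : TC evenPart :=
  TC.reindex' (fun x => 2 * x.1) (Primrec.nat_mul.comp (Primrec.const 2) Primrec.fst)

theorem TC.odd : TC oddPart :=
  TC.reindex' (fun x => 2 * x.1 + 1)
    (Primrec.succ.comp (Primrec.nat_mul.comp (Primrec.const 2) Primrec.fst))

theorem TC.tl : TC tl := TC.reindex' (fun x => x.1 + 1) (Primrec.succ.comp Primrec.fst)

theorem TC.zero : TC (fun _ _ => 0) :=
  TC.reindex Prod.fst (fun _ => 0) Computable.fst (Computable.const 0)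

/-- change the head by a primitive recursive function -/
theorem TC.head (g : ℕ → ℕ) (hg : Primrec g) : TC (fun p => _root_.cns (g (p 0)) (_root_.tl p)) := by
  have hp : Primrec (fun x : (ℕ × ℕ) × ℕ => if x.1.1 = 0 then g x.1.2 else x.2) :=
    Primrec.ite (Primrec.eq.comp (Primrec.fst.comp Primrec.fst) (Primrec.const 0))
      (hg.comp (Primrec.snd.comp Primrec.fst)) Primrec.snd
  refine (TC.reindex Prod.fst _ Computable.fst hp.to_comp).mono ?_
  rintro p _ rfl
  funext n
  cases n <;> simp [_root_.cns, _root_.tl]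

/-- from `⟨a, b⟩` to `a(0) b`. -/
theorem TC.cnsHead : TC (fun t => cns (evenPart t 0) (oddPart t)) := by
  have hp : Primrec (fun x : (ℕ × ℕ) => 2 * x.1 - 1) :=
    Primrec.nat_sub.comp (Primrec.nat_mul.comp (Primrec.const 2) Primrec.fst) (Primrec.const 1)
  refine (TC.reindex' _ hp).mono ?_
  rintro p _ rfl
  funext n
  cases n with
  | zero => simp [cns, evenPart]
  | succ n => simp [cns, oddPart]; congr 1

theorem TC.cns {F G : Bs → Bs} (hF : TC F) (hG : TC G) : TC (fun p => cns (F p 0) (G p)) := by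
  refine (TC.cnsHead.comp (TC.pair hF hG)).mono ?_
  rintro p _ rfl
  simp only [even_pair, odd_pair]

/-- `k p ↦ p_k`, `p_k` the `k`-th component of the star name `p`. -/
theorem TC.sel : TC (fun s => proj (_root_.tl (_root_.tl s)) (s 0)) :=
  TC.reindex' (fun x => Nat.pair x.2 x.1 + 1 + 1)
    (Primrec.succ.comp (Primrec.succ.comp (Primrec₂.natPair.comp Primrec.snd Primrec.fst)))

theorem TC.proj (i : ℕ) : TC (fun p => proj p i) :=
  TC.reindex' (fun x => Nat.pair i x.1) (Primrec₂.natPair.comp (Primrec.const i) Primrec.fst)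

def upd (k : ℕ) (y Y : Bs) : Bs :=
  fun n => if n.unpair.1 = k then y n.unpair.2 else Y n

theorem proj_upd_same (k : ℕ) (y Y : Bs) : proj (upd k y Y) k = y := by
  funext n; simp [proj, upd]

theorem proj_upd_ne {k i : ℕ} (h : i ≠ k) (y Y : Bs) : proj (upd k y Y) i = proj Y i := by
  funext n; simp [proj, upd, h]

/-- `k ⟨y, Y⟩ ↦ Y[k := y]`. -/
theorem TC.upd : TC (fun s => upd (s 0) (evenPart (_root_.tl s)) (oddPart (_root_.tl s))) := by
  have hu : Primrec (fun x : ℕ × ℕ => x.1.unpair) := Primrec.unpair.comp Primrec.fst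
  have hp : Primrec (fun x : ℕ × ℕ => if x.1.unpair.1 = x.2 then 2 * x.1.unpair.2 + 1
      else 2 * x.1 + 1 + 1) :=
    Primrec.ite (Primrec.eq.comp (Primrec.fst.comp hu) Primrec.snd)
      (Primrec.succ.comp (Primrec.nat_mul.comp (Primrec.const 2) (Primrec.snd.comp hu)))
      (Primrec.succ.comp (Primrec.succ.comp
        (Primrec.nat_mul.comp (Primrec.const 2) Primrec.fst)))
  refine (TC.reindex' _ hp).mono ?_
  rintro p _ rfl
  funext n
  simp only [_root_.upd, evenPart, oddPart, _root_.tl]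
  split_ifs <;> rfl

/-- duplicating / combining two names into columns -/
def cols (p q : Bs) : Bs := upd 0 p (fun n => q n.unpair.2)

theorem TC.col : TC (fun q n => q n.unpair.2) :=
  TC.reindex' (fun x => x.1.unpair.2) (Primrec.snd.comp (Primrec.unpair.comp Primrec.fst))

theorem TC.cols {F G : Bs → Bs} (hF : TC F) (hG : TC G) : TC (fun p => cols (F p) (G p)) := by
  refine (TC.upd.comp (TC.cns TC.zero (TC.pair hF (TC.col.comp hG)))).mono ?_
  rintro p _ rfl
  simp only [tl_cns, cns_zero, even_pair, odd_pair, _root_.cols]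

theorem proj_cols_zero (p q : Bs) : _root_.proj (cols p q) 0 = p := proj_upd_same _ _ _

theorem proj_cols_one (p q : Bs) : _root_.proj (cols p q) 1 = q := by
  rw [cols, proj_upd_ne (by omega)]; funext n; simp [proj]

theorem TC.cnsConst (k : ℕ) {F : Bs → Bs} (hF : TC F) : TC (fun p => _root_.cns k (F p)) := by
  refine ((TC.head (fun _ => k) (Primrec.const k)).comp (TC.cns TC.zero hF)).mono ?_
  rintro p _ rfl
  simp only [tl_cns]

/-! ### Problems as relations on Baire space -/

def Sol {X Y : Type*} (δX : RepSp X) (δY : RepSp Y) (f : X → Set Y) (p q : Bs) : Prop :=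
  ∃ x ∈ δX.δ p, ∃ y ∈ δY.δ q, y ∈ f x

theorem sol_dom {X Y : Type*} (δX : RepSp X) (δY : RepSp Y) (f : X → Set Y) (p : Bs) :
    (∃ q, Sol δX δY f p q) ↔ ∃ x ∈ δX.δ p, (f x).Nonempty := by
  constructor
  · rintro ⟨q, x, hx, y, hy, h⟩
    exact ⟨x, hx, y, h⟩
  · rintro ⟨x, hx, y, h⟩
    obtain ⟨q, hq⟩ := δY.surj y
    exact ⟨q, x, hx, y, hq, h⟩

theorem realizes_iff {X Y : Type*} (δX : RepSp X) (δY : RepSp Y) (f : X → Set Y)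
    (F : Bs →. Bs) :
    Realizes δX δY f F ↔ ∀ p, (∃ q, Sol δX δY f p q) → ∃ q ∈ F p, Sol δX δY f p q := by
  constructor
  · intro h p hp
    obtain ⟨x, hx, hn⟩ := (sol_dom _ _ _ _).1 hp
    obtain ⟨q, hq, y, hy, hf⟩ := h p x hx hn
    exact ⟨q, hq, x, hx, y, hy, hf⟩
  · intro h p x hx hn
    obtain ⟨q, hq, x', hx', y, hy, hf⟩ := h p ((sol_dom _ _ _ _).2 ⟨x, hx, hn⟩)
    obtain rfl := Part.mem_unique hx hx'
    exact ⟨q, hq, y, hy, hf⟩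

def BRed (S T : Bs → Bs → Prop) : Prop :=
  ∃ RK RH : Bs → Bs → Prop, RC RK ∧ RC RH ∧ ∀ p, (∃ q, S p q) →
    ∃ r, RK p r ∧ (∃ q, T r q) ∧ ∀ q, T r q → ∃ t, RH (pairB p q) t ∧ S p t

theorem wred_iff {X Y Z W : Type*} (δX : RepSp X) (δY : RepSp Y) (δZ : RepSp Z) (δW : RepSp W)
    (f : X → Set Y) (g : Z → Set W) :
    WRed δX δY δZ δW f g ↔ BRed (Sol δX δY f) (Sol δZ δW g) := by
  constructor
  · rintro ⟨H, K, hH, hK, h⟩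
    refine ⟨_, _, hK.rc, hH.rc, fun p hp => ?_⟩
    let G0 : Bs →. Bs := fun r => ⟨∃ q, Sol δZ δW g r q, fun h => Classical.choose h⟩
    have hG0 : ∀ r q, q ∈ G0 r → Sol δZ δW g r q := by
      rintro r q ⟨hd, rfl⟩
      exact Classical.choose_spec hd
    have hG0' : ∀ r, (∃ q, Sol δZ δW g r q) → ∃ q ∈ G0 r, Sol δZ δW g r q :=
      fun r hr => ⟨_, ⟨hr, rfl⟩, Classical.choose_spec hr⟩
    obtain ⟨t, ht, -⟩ := (realizes_iff _ _ _ _).1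
      (h G0 ((realizes_iff _ _ _ _).2 hG0')) p hp
    obtain ⟨r, hr, ht⟩ := Part.mem_bind_iff.1 ht
    obtain ⟨q0, hq0, -⟩ := Part.mem_bind_iff.1 ht
    refine ⟨r, hr, ⟨q0, hG0 _ _ hq0⟩, fun q hq => ?_⟩
    let G1 : Bs →. Bs := fun r' => if r' = r then Part.some q else G0 r'
    have hG1 : ∀ r, (∃ q, Sol δZ δW g r q) → ∃ q ∈ G1 r, Sol δZ δW g r q := by
      intro r' hr'
      by_cases e : r' = r
      · subst e
        exact ⟨q, by simp [G1], hq⟩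
      · simpa [G1, e] using hG0' r' hr'
    obtain ⟨t, ht, hS⟩ := (realizes_iff _ _ _ _).1
      (h G1 ((realizes_iff _ _ _ _).2 hG1)) p hp
    obtain ⟨r', hr', ht⟩ := Part.mem_bind_iff.1 ht
    obtain rfl := Part.mem_unique hr hr'
    obtain ⟨q', hq', ht2⟩ := Part.mem_bind_iff.1 ht
    have : q' = q := by simpa [G1] using hq'
    subst this
    exact ⟨t, ht2, hS⟩
  · rintro ⟨RK, RH, hK, hH, h⟩
    obtain ⟨K, hK, hKR⟩ := hK.exists_F
    obtain ⟨H, hH, hHR⟩ := hH.exists_F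
    refine ⟨H, K, hH, hK, fun G hG => (realizes_iff _ _ _ _).2 fun p hp => ?_⟩
    obtain ⟨r, hr, hd, hb⟩ := h p hp
    obtain ⟨q, hq, hT⟩ := (realizes_iff _ _ _ _).1 hG r hd
    obtain ⟨t, ht, hS⟩ := hb q hT
    exact ⟨t, Part.mem_bind_iff.2 ⟨r, hKR _ _ hr, Part.mem_bind_iff.2 ⟨q, hq, hHR _ _ ht⟩⟩, hS⟩

theorem sol_id (p q : Bs) : Sol repBaire repBaire idProblem p q ↔ q = p := by
  simp [Sol, repBaire, idProblem]

theorem sol_prod {X Y : Type*} (δX : RepSp X) (δY : RepSp Y) (f : X → Set Y) (p q : Bs) :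
    Sol (prodRep δX δX) (prodRep δY δY) (prodProblem f f) p q ↔
      Sol δX δY f (evenPart p) (evenPart q) ∧ Sol δX δY f (oddPart p) (oddPart q) := by
  constructor
  · rintro ⟨x, hx, y, hy, h⟩
    obtain ⟨x1, hx1, hx⟩ := Part.mem_bind_iff.1 hx
    obtain ⟨x2, hx2, rfl⟩ := (Part.mem_map_iff _).1 hx
    obtain ⟨y1, hy1, hy⟩ := Part.mem_bind_iff.1 hy
    obtain ⟨y2, hy2, rfl⟩ := (Part.mem_map_iff _).1 hy
    exact ⟨⟨x1, hx1, y1, hy1, h.1⟩, ⟨x2, hx2, y2, hy2, h.2⟩⟩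
  · rintro ⟨⟨x1, hx1, y1, hy1, h1⟩, ⟨x2, hx2, y2, hy2, h2⟩⟩
    exact ⟨(x1, x2), Part.mem_bind_iff.2 ⟨x1, hx1, (Part.mem_map_iff _).2 ⟨x2, hx2, rfl⟩⟩,
      (y1, y2), Part.mem_bind_iff.2 ⟨y1, hy1, (Part.mem_map_iff _).2 ⟨y2, hy2, rfl⟩⟩, h1, h2⟩

theorem star_mem {X : Type*} (δX : RepSp X) (r : Bs) (z : Σ n : ℕ, Fin n → X) :
    z ∈ (starRep δX).δ r ↔
      ∃ x : Fin (r 0) → X, z = ⟨r 0, x⟩ ∧ ∀ i : Fin (r 0), x i ∈ δX.δ (proj (tl r) i) := by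
  constructor
  · rintro ⟨hd, rfl⟩
    exact ⟨_, rfl, fun i => Classical.choose_spec (hd i)⟩
  · rintro ⟨x, rfl, hx⟩
    have hd : ∀ i : Fin (r 0), ∃ x, x ∈ δX.δ (proj (fun m => r (m + 1)) i) :=
      fun i => ⟨x i, hx i⟩
    refine ⟨hd, ?_⟩
    exact congrArg (Sigma.mk (r 0))
      (funext fun i => Part.mem_unique (Classical.choose_spec (hd i)) (hx i))

theorem sol_star {X Y : Type*} (δX : RepSp X) (δY : RepSp Y) (f : X → Set Y) (p q : Bs) :
    Sol (starRep δX) (starRep δY) (starProblem f) p q ↔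
      p 0 = q 0 ∧ ∀ i < p 0, Sol δX δY f (proj (tl p) i) (proj (tl q) i) := by
  constructor
  · rintro ⟨x', hx', y', hy', h⟩
    obtain ⟨x, rfl, hx⟩ := (star_mem _ _ _).1 hx'
    obtain ⟨y, rfl, hy⟩ := (star_mem _ _ _).1 hy'
    obtain ⟨e, h⟩ := h
    exact ⟨e, fun i hi => ⟨x ⟨i, hi⟩, hx ⟨i, hi⟩, _, hy (Fin.cast e ⟨i, hi⟩), h ⟨i, hi⟩⟩⟩
  · rintro ⟨e, h⟩
    choose x hx y hy hf using fun i : Fin (p 0) => h i i.2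
    refine ⟨⟨p 0, x⟩, (star_mem _ _ _).2 ⟨x, rfl, hx⟩, ⟨q 0, fun i => y (Fin.cast e.symm i)⟩,
      (star_mem _ _ _).2 ⟨_, rfl, fun i => hy (Fin.cast e.symm i)⟩, e, fun i => hf i⟩

/-! ### Reductions -/

theorem BRed.trans {S T U : Bs → Bs → Prop} (h : BRed S T) (h' : BRed T U) : BRed S U := by
  obtain ⟨K, H, hK, hH, h⟩ := h
  obtain ⟨K', H', hK', hH', h'⟩ := h'
  refine ⟨fun p r' => ∃ r, K p r ∧ K' r r', fun s t => ∃ w, (∃ r, K (evenPart s) r ∧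
    H' (pairB r (oddPart s)) w) ∧ H (pairB (evenPart s) w) t, hK.comp hK', ?_, ?_⟩
  · have h1 : RC (fun s w => ∃ r, K (evenPart s) r ∧ H' (pairB r (oddPart s)) w) :=
      (RC.comp (RC.pair (hK.pre TC.even) TC.odd) hH').mono
        fun s w ⟨r, hr, hw⟩ => ⟨_, ⟨r, _, hr, rfl, rfl⟩, hw⟩
    exact (RC.comp (RC.pair TC.even h1) hH).mono
      fun s t ⟨w, hw, ht⟩ => ⟨_, ⟨_, w, rfl, hw, rfl⟩, ht⟩
  · intro p hp
    obtain ⟨r, hr, hd, hb⟩ := h p hp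
    obtain ⟨r', hr', hd', hb'⟩ := h' r hd
    refine ⟨r', ⟨r, hr, hr'⟩, hd', fun q hq => ?_⟩
    obtain ⟨w, hw, hT⟩ := hb' q hq
    obtain ⟨t, ht, hS⟩ := hb w hT
    simp only [even_pair, odd_pair]
    exact ⟨t, ⟨w, ⟨r, hr, hw⟩, ht⟩, hS⟩

def PS (S : Bs → Bs → Prop) (p q : Bs) : Prop :=
  S (evenPart p) (evenPart q) ∧ S (oddPart p) (oddPart q)

def SS (S : Bs → Bs → Prop) (p q : Bs) : Prop :=
  p 0 = q 0 ∧ ∀ i < p 0, S (proj (tl p) i) (proj (tl q) i)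

theorem BRed.ofTC {S T : Bs → Bs → Prop} {K H : Bs → Bs} (hK : TC K) (hH : TC H)
    (h : ∀ p, (∃ q, S p q) → (∃ q, T (K p) q) ∧ ∀ q, T (K p) q → S p (H (pairB p q))) :
    BRed S T :=
  ⟨_, _, hK, hH, fun p hp => ⟨_, rfl, (h p hp).1, fun q hq => ⟨_, rfl, (h p hp).2 q hq⟩⟩⟩

theorem id_star (S : Bs → Bs → Prop) : BRed (fun p q => q = p) (SS S) := by
  refine BRed.ofTC TC.zero TC.even fun p _ => ⟨⟨fun _ => 0, rfl, ?_⟩, ?_⟩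
  · intro i hi; simp at hi
  · intro q _; exact even_pair _ _

theorem self_prod (S : Bs → Bs → Prop) : BRed S (PS S) := by
  refine BRed.ofTC (TC.pair TC.id TC.id) (TC.even.comp TC.odd) ?_
  rintro p ⟨q, hq⟩
  refine ⟨⟨pairB q q, ?_⟩, ?_⟩
  · simpa only [PS, even_pair, odd_pair] using ⟨hq, hq⟩
  · intro q hq
    simp only [PS, even_pair, odd_pair] at hq ⊢
    exact hq.1

theorem self_star (S : Bs → Bs → Prop) : BRed S (SS S) := by
  refine BRed.ofTC (TC.cnsConst 1 (TC.cols TC.id TC.id))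
    ((TC.proj 0).comp (TC.tl.comp TC.odd)) ?_
  rintro p ⟨q, hq⟩
  refine ⟨⟨cns 1 (cols q q), ?_⟩, ?_⟩
  · refine ⟨rfl, ?_⟩
    intro i hi
    rw [cns_zero] at hi
    obtain rfl : i = 0 := by omega
    simpa only [tl_cns, proj_cols_zero] using hq
  · intro q hq
    have := hq.2 0 (by rw [cns_zero]; omega)
    simpa only [tl_cns, proj_cols_zero, odd_pair] using this

theorem prod_star (S : Bs → Bs → Prop) : BRed (PS S) (SS S) := by
  refine BRed.ofTC (TC.cnsConst 2 (TC.cols TC.even TC.odd))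
    (TC.pair ((TC.proj 0).comp (TC.tl.comp TC.odd)) ((TC.proj 1).comp (TC.tl.comp TC.odd))) ?_
  rintro p ⟨q, hq⟩
  refine ⟨⟨cns 2 (cols (evenPart q) (oddPart q)), ?_⟩, ?_⟩
  · refine ⟨rfl, ?_⟩
    intro i hi
    rw [cns_zero] at hi
    obtain rfl | rfl : i = 0 ∨ i = 1 := by omega
    · simpa only [tl_cns, proj_cols_zero] using hq.1
    · simpa only [tl_cns, proj_cols_one] using hq.2
  · intro q hq
    have h0 := hq.2 0 (by rw [cns_zero]; omega)
    have h1 := hq.2 1 (by rw [cns_zero]; omega)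
    simp only [tl_cns, proj_cols_zero, proj_cols_one] at h0 h1
    simpa only [PS, even_pair, odd_pair] using ⟨h0, h1⟩

theorem exists_seq (n : ℕ) (Good : ℕ → Bs → Prop) (P : ℕ → Bs → Bs → Prop) (c : Bs)
    (hc : Good 0 c) (h : ∀ i < n, ∀ a, Good i a → ∃ b, Good (i + 1) b ∧ P i a b) :
    ∃ s : ℕ → Bs, s 0 = c ∧ (∀ i ≤ n, Good i (s i)) ∧ ∀ i < n, P i (s i) (s (i + 1)) := by
  have h' : ∀ i a, ∃ b, i < n → Good i a → Good (i + 1) b ∧ P i a b := by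
    intro i a
    by_cases hi : i < n ∧ Good i a
    · obtain ⟨b, hb⟩ := h i hi.1 a hi.2
      exact ⟨b, fun _ _ => hb⟩
    · exact ⟨a, fun h1 h2 => absurd ⟨h1, h2⟩ hi⟩
  choose nx hnx using h'
  let s : ℕ → Bs := fun i => Nat.rec c (fun i a => nx i a) i
  have hs : ∀ i ≤ n, Good i (s i) := by
    intro i
    induction i with
    | zero => exact fun _ => hc
    | succ i ih => exact fun hi => (hnx i (s i) (by omega) (ih (by omega))).1
  exact ⟨s, rfl, hs, fun i hi => (hnx i (s i) hi (hs i (by omega))).2⟩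

/-- The forward computation: from `k p` to `r_k`. -/
def FW (RK : Bs → Bs → Prop) (c s r : Bs) : Prop :=
  ∃ rs : ℕ → Bs, rs 0 = c ∧ rs (s 0) = r ∧
    ∀ i < s 0, RK (pairB (proj (tl (tl s)) i) (rs i)) (rs (i + 1))

theorem FW.rc {RK : Bs → Bs → Prop} (hK : RC RK) {c : Bs} (hc : RC (fun _ q => q = c)) :
    RC (FW RK c) := by
  -- loop states are `i ⟨p, r⟩`
  have hP : TC (fun s : Bs => evenPart (tl s)) := TC.even.comp TC.tl
  have hQ : TC (fun s : Bs => oddPart (tl s)) := TC.odd.comp TC.tl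
  have hstep : RC (fun s s' => ∃ r', RK (pairB (proj (tl (evenPart (tl s))) (s 0))
      (oddPart (tl s))) r' ∧ s' = cns (s 0 + 1) (pairB (evenPart (tl s)) r')) := by
    have h1 : TC (fun s : Bs => pairB (proj (tl (evenPart (tl s))) (s 0)) (oddPart (tl s))) := by
      refine (TC.pair (TC.sel.comp (TC.cns TC.id hP)) hQ).mono ?_
      rintro s _ rfl
      simp only [tl_cns, cns_zero]
    have h2 : TC (fun t : Bs => cns (t 0 + 1) (pairB (evenPart (tl (evenPart t))) (oddPart t))) := by
      refine ((TC.head _ Primrec.succ).comp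
        (TC.cns TC.id (TC.pair (hP.comp TC.even) TC.odd))).mono ?_
      rintro s _ rfl
      simp only [tl_cns, cns_zero]
    refine (RC.post (hK.pre h1) TC.id h2).mono ?_
    rintro s s' ⟨r', hr', rfl⟩
    exact ⟨r', hr', by simp only [pairB_zero, even_pair, odd_pair]⟩
  have hstart : TC (fun s : Bs => cns (s 0) (cns 0 (pairB (tl s) c))) :=
    TC.cns TC.id (TC.cnsConst 0 (TC.pair TC.tl hc))
  refine (RC.comp ((RC.iter hstep).pre hstart) hQ).mono ?_
  rintro s r ⟨rs, h0, hr, h⟩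
  refine ⟨cns (s 0) (pairB (tl s) r), ⟨fun i => cns i (pairB (tl s) (rs i)), ?_, ?_, ?_⟩, ?_⟩
  · show cns 0 (pairB (tl s) (rs 0)) = _
    rw [h0]
    exact (tl_cns (s 0) _).symm
  · simp only [cns_zero, hr]
  · intro i hi
    rw [cns_zero] at hi
    refine ⟨rs (i + 1), ?_, ?_⟩
    · simpa only [tl_cns, cns_zero, even_pair, odd_pair] using h i hi
    · simp only [tl_cns, cns_zero, even_pair]
  · simp only [tl_cns, odd_pair]

/-- One step of the backward computation on states `k ⟨p, ⟨q, Y⟩⟩`. -/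
def BStep (RK RH : Bs → Bs → Prop) (c s s' : Bs) : Prop :=
  ∃ k p q Y r h, s = cns (k + 1) (pairB p (pairB q Y)) ∧ FW RK c (cns k p) r ∧
    RH (pairB (pairB (proj (tl p) k) r) q) h ∧
    s' = cns k (pairB p (pairB (oddPart h) (upd k (evenPart h) Y)))

theorem BStep.rc {RK RH : Bs → Bs → Prop} (hK : RC RK) (hH : RC RH) {c : Bs}
    (hc : RC (fun _ q => q = c)) : RC (BStep RK RH c) := by
  have hD : TC (fun s : Bs => cns (s 0 - 1) (tl s)) := TC.head _ Primrec.pred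
  have hP : TC (fun s : Bs => evenPart (tl s)) := TC.even.comp TC.tl
  have hQ : TC (fun s : Bs => evenPart (oddPart (tl s))) := TC.even.comp (TC.odd.comp TC.tl)
  have hY : TC (fun s : Bs => oddPart (oddPart (tl s))) := TC.odd.comp (TC.odd.comp TC.tl)
  have hkp : TC (fun s : Bs => cns (s 0) (evenPart (tl s))) := TC.cns TC.id hP
  have hr : RC (fun s r => FW RK c (cns (s 0) (evenPart (tl s))) r) := (FW.rc hK hc).pre hkp
  have hpk : TC (fun s : Bs => proj (tl (evenPart (tl s))) (s 0)) := by
    refine (TC.sel.comp hkp).mono ?_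
    rintro s _ rfl
    simp only [tl_cns, cns_zero]
  have hh : RC (fun s h => ∃ r, FW RK c (cns (s 0) (evenPart (tl s))) r ∧
      RH (pairB (pairB (proj (tl (evenPart (tl s))) (s 0)) r) (evenPart (oddPart (tl s)))) h) := by
    refine (RC.comp (RC.pair (RC.pair hpk hr) hQ) hH).mono ?_
    rintro s h ⟨r, h1, h2⟩
    exact ⟨_, ⟨_, _, ⟨_, r, rfl, h1, rfl⟩, rfl, rfl⟩, h2⟩
  have hout : TC (fun t : Bs => cns (evenPart t 0) (pairB (evenPart (tl (evenPart t)))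
      (pairB (oddPart (oddPart t)) (upd (evenPart t 0) (evenPart (oddPart t))
        (oddPart (oddPart (tl (evenPart t)))))))) := by
    refine (TC.cns TC.even (TC.pair (hP.comp TC.even) (TC.pair (TC.odd.comp TC.odd)
      (TC.upd.comp (TC.cns TC.even
        (TC.pair (TC.even.comp TC.odd) (hY.comp TC.even))))))).mono ?_
    rintro s _ rfl
    simp only [tl_cns, cns_zero, even_pair, odd_pair]
  refine ((RC.post hh TC.id hout).pre hD).mono ?_
  rintro s s' ⟨k, p, q, Y, r, h, rfl, h1, h2, rfl⟩
  refine ⟨h, ⟨r, ?_, ?_⟩, ?_⟩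
  · simpa only [tl_cns, cns_zero, even_pair, odd_pair, Nat.add_sub_cancel] using h1
  · simpa only [tl_cns, cns_zero, even_pair, odd_pair, Nat.add_sub_cancel] using h2
  · simp only [tl_cns, cns_zero, even_pair, odd_pair, Nat.add_sub_cancel]

theorem star_self (S : Bs → Bs → Prop) (hid : BRed (fun p q => q = p) S)
    (hprod : BRed (PS S) S) : BRed (SS S) S := by
  obtain ⟨K0, H0, hK0, hH0, h0⟩ := hid
  obtain ⟨RK, RH, hK, hH, h⟩ := hprod
  obtain ⟨c, hc0, hcd, -⟩ := h0 (fun _ => 0) ⟨_, rfl⟩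
  have hc : RC (fun _ q => q = c) := by
    refine (hK0.pre TC.zero).mono ?_
    rintro _ _ rfl
    exact hc0
  -- initial state of the backward loop
  have hstart : TC (fun t : Bs => cns (t 0) (cns (t 0)
      (pairB (evenPart t) (pairB (oddPart t) (fun _ => 0))))) :=
    TC.cns TC.id (TC.cns TC.id (TC.pair TC.even (TC.pair TC.odd TC.zero)))
  have hout : TC (fun s : Bs => cns (evenPart (tl s) 0) (oddPart (oddPart (tl s)))) :=
    TC.cns (TC.even.comp TC.tl) (TC.odd.comp (TC.odd.comp TC.tl))
  refine ⟨_, _, (FW.rc hK hc).pre (TC.cns TC.id TC.id),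
    RC.comp ((RC.iter (BStep.rc hK hH hc)).pre hstart) hout, ?_⟩
  rintro p ⟨q0, -, hq0⟩
  obtain ⟨rs, hrs0, hgood, hrs⟩ := exists_seq (p 0) (fun _ r => ∃ q, S r q)
    (fun i a b => RK (pairB (proj (tl p) i) a) b ∧ ∀ q, S b q →
      ∃ h, RH (pairB (pairB (proj (tl p) i) a) q) h ∧ S (proj (tl p) i) (evenPart h) ∧
        S a (oddPart h)) c hcd (by
      rintro i hi a ⟨w, hw⟩
      obtain ⟨b, hb, hbd, hbb⟩ := h (pairB (proj (tl p) i) a)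
        ⟨pairB (proj (tl q0) i) w, by
          simpa only [PS, even_pair, odd_pair] using ⟨hq0 i hi, hw⟩⟩
      refine ⟨b, hbd, hb, fun q hq => ?_⟩
      obtain ⟨t, ht, hS⟩ := hbb q hq
      simp only [PS, even_pair, odd_pair] at hS
      exact ⟨t, ht, hS⟩)
  have hFW : ∀ k ≤ p 0, FW RK c (cns k p) (rs k) := by
    intro k hk
    refine ⟨rs, hrs0, by rw [cns_zero], fun i hi => ?_⟩
    rw [cns_zero] at hi
    rw [tl_cns]
    exact (hrs i (by omega)).1
  refine ⟨rs (p 0), hFW _ le_rfl, hgood _ le_rfl, fun q hq => ?_⟩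
  obtain ⟨ss, hss0, hssg, hss⟩ := exists_seq (p 0)
    (fun j s => ∃ q Y, s = cns (p 0 - j) (pairB p (pairB q Y)) ∧ S (rs (p 0 - j)) q ∧
      ∀ i, p 0 - j ≤ i → i < p 0 → S (proj (tl p) i) (proj Y i))
    (fun _ s s' => BStep RK RH c s s') (cns (p 0) (pairB p (pairB q (fun _ => 0))))
    ⟨q, _, rfl, hq, fun i h1 h2 => by omega⟩ (by
      rintro j hj _ ⟨q, Y, rfl, hq, hY⟩
      obtain ⟨k, hk⟩ : ∃ k, p 0 - j = k + 1 := ⟨p 0 - j - 1, by omega⟩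
      have hk' : p 0 - (j + 1) = k := by omega
      rw [hk] at hq hY ⊢
      rw [hk']
      obtain ⟨h, hh, hy, hq'⟩ := (hrs k (by omega)).2 q hq
      refine ⟨_, ⟨oddPart h, upd k (evenPart h) Y, rfl, hq', ?_⟩,
        k, p, q, Y, rs k, h, rfl, hFW k (by omega), hh, rfl⟩
      intro i h1 h2
      by_cases hik : i = k
      · subst hik
        rwa [proj_upd_same]
      · rw [proj_upd_ne hik]
        exact hY i (by omega) h2)
  obtain ⟨q', Y, hfin, -, hY⟩ := hssg (p 0) le_rfl
  refine ⟨cns (p 0) Y, ⟨_, ⟨ss, ?_, rfl, ?_⟩, ?_⟩, ?_⟩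
  · rw [hss0, pairB_zero, even_pair, odd_pair]
    exact (tl_cns _ _).symm
  · intro i hi
    rw [cns_zero, pairB_zero] at hi
    exact hss i hi
  · rw [cns_zero, pairB_zero, hfin]
    simp only [tl_cns, even_pair, odd_pair]
  · refine ⟨(cns_zero _ _).symm, fun i hi => ?_⟩
    rw [tl_cns]
    exact hY i (by omega) hi

/-- `f` is pointed and idempotent iff `f* ≡_W f`. -/
theorem pointed_idempotent_iff_star (X Y : Type) (δX : RepSp X) (δY : RepSp Y)
    (f : X → Set Y) :
    (WRed repBaire repBaire δX δY idProblem f ∧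
      WEquiv (prodRep δX δX) (prodRep δY δY) δX δY (prodProblem f f) f) ↔
    WEquiv (starRep δX) (starRep δY) δX δY (starProblem f) f := by
  have e1 : Sol repBaire repBaire idProblem = fun p q => q = p := by
    funext p q; exact propext (sol_id p q)
  have e2 : Sol (prodRep δX δX) (prodRep δY δY) (prodProblem f f) = PS (Sol δX δY f) := by
    funext p q; exact propext (sol_prod δX δY f p q)
  have e3 : Sol (starRep δX) (starRep δY) (starProblem f) = SS (Sol δX δY f) := by
    funext p q; exact propext (sol_star δX δY f p q)
  simp only [WEquiv, wred_iff, e1, e2, e3]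
  constructor
  · rintro ⟨h1, h2, -⟩
    exact ⟨star_self _ h1 h2, self_star _⟩
  · rintro ⟨h, -⟩
    exact ⟨(id_star _).trans h, (prod_star _).trans h, self_prod _⟩
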